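/- arXiv:2110.04944 — 2 statements merged into one kernel-verified Lean document; each statement's English description precedes it below -/
import Mathlib

section
/- For every integer n ≥ 3, the Lebesgue measure (area) of the set {(x,y) ∈ ℝ² : |Re((x+iy)^n)| ≤ 1} equals B(1/2 − 1/n, 1/2), where B denotes the Euler beta function. -/
/-!
In polar coordinates `Re ((x + iy)^n) = r ^ n * cos (n θ)`, so for almost every `θ` the ray at angle
`θ` meets the region in `0 < r ≤ |cos (n θ)| ^ (-1 / n)` and contributes `|cos (n θ)| ^ (-2 / n) / 2`
to the area (`lintegral_radial`). Since `|cos|` has period `π`, rescaling by `n` does not change the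
integral over `(-π, π)`, and symmetry about `π / 2` reduces it to four times the integral over
`(0, π / 2)` (`integral_abs_cos_mul_rpow`). There the substitution `x = cos² θ` turns Euler's
integral for `B(a, 1/2)` into `2 ∫ (cos θ) ^ (2 a - 1) dθ` (`integral_cos_rpow`), and
`2 a - 1 = -2 / n` for `a = 1 / 2 - 1 / n`, which is positive exactly because `n ≥ 3`.
-/

open MeasureTheory

/-- The Euler beta function `B(a, b) = Γ(a) Γ(b) / Γ(a + b)`. -/
noncomputable def eulerBeta (a b : ℝ) : ℝ :=
  Real.Gamma a * Real.Gamma b / Real.Gamma (a + b)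

open Set Real

/-- Euler's integral for the beta function, over the reals, together with its convergence. -/
lemma eulerBeta_integral {a b : ℝ} (ha : 0 < a) (hb : 0 < b) :
    IntegrableOn (fun x : ℝ => x ^ (a - 1) * (1 - x) ^ (b - 1)) (Ioo 0 1) ∧
      ∫ x in Ioo (0 : ℝ) 1, x ^ (a - 1) * (1 - x) ^ (b - 1) = eulerBeta a b := by
  have hc := Complex.betaIntegral_convergent (u := a) (v := b) (by simpa) (by simpa)
  rw [intervalIntegrable_iff_integrableOn_Ioo_of_le zero_le_one] at hc
  have hre : ∀ x ∈ Ioo (0 : ℝ) 1,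
      RCLike.re ((x : ℂ) ^ ((a : ℂ) - 1) * (1 - (x : ℂ)) ^ ((b : ℂ) - 1)) =
        x ^ (a - 1) * (1 - x) ^ (b - 1) := by
    intro x hx
    have h1 : (0 : ℝ) ≤ 1 - x := by linarith [hx.2]
    have : (x : ℂ) ^ ((a : ℂ) - 1) * (1 - (x : ℂ)) ^ ((b : ℂ) - 1) =
        ((x ^ (a - 1) * (1 - x) ^ (b - 1) : ℝ) : ℂ) := by
      rw [Complex.ofReal_mul, Complex.ofReal_cpow hx.1.le, Complex.ofReal_cpow h1]
      push_cast
      rfl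
    rw [this]
    exact Complex.ofReal_re _
  refine ⟨IntegrableOn.congr_fun hc.re hre measurableSet_Ioo, ?_⟩
  have h := ProbabilityTheory.beta_eq_betaIntegralReal a b ha hb
  rw [Complex.betaIntegral, intervalIntegral.integral_of_le zero_le_one,
    integral_Ioc_eq_integral_Ioo] at h
  rw [← setIntegral_congr_fun measurableSet_Ioo hre, integral_re hc]
  exact h.symm

/-- Euler's integral for `B((s + 1) / 2, 1 / 2)` under the substitution `x = cos² θ`. -/
lemma integral_cos_rpow {s : ℝ} (hs : -1 < s) :
    IntegrableOn (fun θ : ℝ => cos θ ^ s) (Ioo 0 (π / 2)) ∧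
      ∫ θ in Ioo 0 (π / 2), cos θ ^ s = eulerBeta ((s + 1) / 2) (1 / 2) / 2 := by
  obtain ⟨hi, he⟩ := eulerBeta_integral (a := (s + 1) / 2) (b := 1 / 2) (by linarith) (by norm_num)
  have hcos : ∀ θ ∈ Ioo 0 (π / 2), 0 < cos θ := fun θ hθ =>
    cos_pos_of_mem_Ioo ⟨by linarith [hθ.1, pi_pos], hθ.2⟩
  have hsin : ∀ θ ∈ Ioo 0 (π / 2), 0 < sin θ := fun θ hθ =>
    sin_pos_of_pos_of_lt_pi hθ.1 (by linarith [hθ.2, pi_pos])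
  have hd : ∀ θ ∈ Ioo 0 (π / 2), HasDerivWithinAt (fun θ => cos θ ^ 2)
      (-(2 * sin θ * cos θ)) (Ioo 0 (π / 2)) θ := by
    intro θ _
    have h := ((hasDerivAt_cos θ).fun_pow 2).hasDerivWithinAt (s := Ioo 0 (π / 2))
    refine h.congr_deriv ?_
    norm_num
    ring
  have hinj : InjOn (fun θ => cos θ ^ 2) (Ioo 0 (π / 2)) := by
    intro x hx y hy hxy
    have h := (pow_left_inj₀ (hcos x hx).le (hcos y hy).le two_ne_zero).1 hxy
    exact injOn_cos ⟨hx.1.le, by linarith [hx.2, pi_pos]⟩ ⟨hy.1.le, by linarith [hy.2, pi_pos]⟩ h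
  have himg : (fun θ => cos θ ^ 2) '' Ioo 0 (π / 2) = Ioo 0 1 := by
    ext x
    constructor
    · rintro ⟨θ, hθ, rfl⟩
      have := hcos θ hθ
      have := hsin θ hθ
      exact ⟨by positivity, by nlinarith [sin_sq_add_cos_sq θ]⟩
    · rintro ⟨h0, h1⟩
      refine ⟨arccos (√x), ⟨arccos_pos.2 ?_, arccos_lt_pi_div_two.2 (sqrt_pos.2 h0)⟩, ?_⟩
      · rw [sqrt_lt' one_pos]
        simpa
      · have : √x ≤ 1 := sqrt_le_one.2 h1.le
        simp only
        rw [cos_arccos (by linarith [sqrt_nonneg x]) this, sq_sqrt h0.le]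
  have hfun : ∀ θ ∈ Ioo 0 (π / 2), |(-(2 * sin θ * cos θ))| •
      ((cos θ ^ 2) ^ ((s + 1) / 2 - 1) * (1 - cos θ ^ 2) ^ ((1 : ℝ) / 2 - 1)) =
        2 * cos θ ^ s := by
    intro θ hθ
    have hc := hcos θ hθ
    have hs' := hsin θ hθ
    rw [abs_neg, abs_of_pos (by positivity), ← sin_sq, ← rpow_natCast, ← rpow_natCast,
      ← rpow_mul hc.le, ← rpow_mul hs'.le, smul_eq_mul]
    have e1 : ((2 : ℕ) : ℝ) * ((s + 1) / 2 - 1) = s - 1 := by push_cast; ring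
    have e2 : ((2 : ℕ) : ℝ) * (1 / 2 - 1) = -1 := by norm_num
    rw [e1, e2, rpow_neg_one, rpow_sub_one hc.ne']
    field_simp
  rw [← himg] at hi he
  rw [integrableOn_image_iff_integrableOn_abs_deriv_smul measurableSet_Ioo hd hinj] at hi
  rw [integral_image_eq_integral_abs_deriv_smul measurableSet_Ioo hd hinj,
    setIntegral_congr_fun measurableSet_Ioo hfun, integral_const_mul] at he
  have hi2 := (hi.congr_fun hfun measurableSet_Ioo).const_mul (1 / 2)
  refine ⟨?_, by linarith⟩
  refine IntegrableOn.congr_fun hi2 (fun θ _ => ?_) measurableSet_Ioo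
  ring

lemma integral_abs_cos_rpow {s : ℝ} (hs : -1 < s) :
    IntervalIntegrable (fun θ : ℝ => |cos θ| ^ s) volume 0 π ∧
      ∫ θ in (0)..π, |cos θ| ^ s = eulerBeta ((s + 1) / 2) (1 / 2) := by
  obtain ⟨hi, he⟩ := integral_cos_rpow hs
  have hp : (0 : ℝ) ≤ π / 2 := by positivity
  have habs : ∀ θ ∈ Ioo 0 (π / 2), cos θ ^ s = |cos θ| ^ s := fun θ hθ => by
    rw [abs_of_pos (cos_pos_of_mem_Ioo ⟨by linarith [hθ.1, pi_pos], hθ.2⟩)]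
  have h1 : IntervalIntegrable (fun θ : ℝ => |cos θ| ^ s) volume 0 (π / 2) := by
    rw [intervalIntegrable_iff_integrableOn_Ioo_of_le hp]
    exact hi.congr_fun habs measurableSet_Ioo
  have h2 : IntervalIntegrable (fun θ : ℝ => |cos θ| ^ s) volume (π / 2) π := by
    have := (h1.comp_sub_left π).symm
    simpa [cos_pi_sub, sub_half] using this
  have e1 : ∫ θ in (0)..(π / 2), |cos θ| ^ s = eulerBeta ((s + 1) / 2) (1 / 2) / 2 := by
    rw [intervalIntegral.integral_of_le hp, integral_Ioc_eq_integral_Ioo,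
      ← setIntegral_congr_fun measurableSet_Ioo habs, he]
  have e2 : ∫ θ in (π / 2)..π, |cos θ| ^ s = ∫ θ in (0)..(π / 2), |cos θ| ^ s := by
    have := intervalIntegral.integral_comp_sub_left (a := 0) (b := π / 2)
      (fun θ : ℝ => |cos θ| ^ s) π
    simp only [cos_pi_sub, abs_neg, sub_half, sub_zero] at this
    exact this.symm
  refine ⟨h1.trans h2, ?_⟩
  rw [← intervalIntegral.integral_add_adjacent_intervals h1 h2, e2, e1]
  ring

lemma integral_abs_cos_mul_rpow {s : ℝ} (hs : -1 < s) {n : ℕ} (hn : n ≠ 0) :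
    IntervalIntegrable (fun θ : ℝ => |cos (n * θ)| ^ s) volume (-π) π ∧
      ∫ θ in (-π)..π, |cos (n * θ)| ^ s = 2 * eulerBeta ((s + 1) / 2) (1 / 2) := by
  obtain ⟨hi, he⟩ := integral_abs_cos_rpow hs
  have hn' : (n : ℝ) ≠ 0 := by exact_mod_cast hn
  have hper : Function.Periodic (fun θ : ℝ => |cos θ| ^ s) π := fun θ => by
    simp [cos_add_pi]
  have hall := hper.intervalIntegrable₀ pi_ne_zero hi
  constructor
  · have := (hall (n * -π) (n * π)).comp_mul_left (c := (n : ℝ))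
    simpa only [mul_div_cancel_left₀ _ hn'] using this
  · rw [intervalIntegral.integral_comp_mul_left (fun θ : ℝ => |cos θ| ^ s) hn']
    have hz := hper.intervalIntegral_add_zsmul_eq (2 * n) (n * -π) hall
    have hend : (n : ℝ) * -π + (2 * n : ℤ) • π = n * π := by
      rw [zsmul_eq_mul]
      push_cast
      ring
    rw [hend, hper.intervalIntegral_add_eq (n * -π) 0, zero_add, he, zsmul_eq_mul] at hz
    rw [hz, smul_eq_mul]
    push_cast
    field_simp

/-- The contribution of a single ray to the area, where `c` is `|cos (n θ)|`. -/
lemma lintegral_radial {n : ℕ} (hn : n ≠ 0) {c : ℝ} (hc : 0 < c) :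
    ∫⁻ r in Ioi (0 : ℝ), ENNReal.ofReal r * {r : ℝ | |r ^ n| * c ≤ 1}.indicator 1 r =
      ENNReal.ofReal (c ^ (-2 / n : ℝ) / 2) := by
  have hn' : (n : ℝ) ≠ 0 := by exact_mod_cast hn
  set R : ℝ := c ^ (-1 / n : ℝ) with hR
  have hR0 : 0 < R := rpow_pos_of_pos hc _
  have hRn : R ^ n = c⁻¹ := by
    rw [hR, ← rpow_natCast, ← rpow_mul hc.le, div_mul_cancel₀ _ hn', rpow_neg_one]
  have hR2 : R ^ 2 = c ^ (-2 / n : ℝ) := by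
    rw [hR, ← rpow_natCast, ← rpow_mul hc.le]
    congr 1
    push_cast
    ring
  have hiff : ∀ r : ℝ, 0 < r → (|r ^ n| * c ≤ 1 ↔ r ≤ R) := by
    intro r hr
    rw [abs_of_pos (by positivity), ← pow_le_pow_iff_left₀ hr.le hR0.le hn, hRn,
      le_inv_comm₀ (by positivity) hc, ← one_div, le_div_iff₀ (by positivity), mul_comm]
  have h1 : ∫⁻ r in Ioi (0 : ℝ), ENNReal.ofReal r * {r : ℝ | |r ^ n| * c ≤ 1}.indicator 1 r =
      ∫⁻ r in Ioi (0 : ℝ), (Iic R).indicator ENNReal.ofReal r := by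
    refine setLIntegral_congr_fun measurableSet_Ioi fun r hr => ?_
    by_cases h : r ≤ R
    · have h' : r ∈ {r : ℝ | |r ^ n| * c ≤ 1} := (hiff r hr).2 h
      simp only [indicator_of_mem h', indicator_of_mem (mem_Iic.2 h), Pi.one_apply, mul_one]
    · have h' : r ∉ {r : ℝ | |r ^ n| * c ≤ 1} := mt (hiff r hr).1 h
      simp only [indicator_of_notMem h', indicator_of_notMem (mt mem_Iic.1 h), mul_zero]
  rw [h1, setLIntegral_indicator measurableSet_Iic, inter_comm, Ioi_inter_Iic,
    ← ofReal_integral_eq_lintegral_ofReal, ← intervalIntegral.integral_of_le hR0.le, integral_id,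
    ← hR2]
  · simp
  · exact (intervalIntegrable_iff_integrableOn_Ioc_of_le hR0.le).1
      (continuous_id.intervalIntegrable 0 R)
  · filter_upwards [ae_restrict_mem measurableSet_Ioc] with r hr using hr.1.le

lemma ae_cos_mul_ne_zero {n : ℕ} (hn : n ≠ 0) : ∀ᵐ θ : ℝ, cos (n * θ) ≠ 0 := by
  have hn' : (n : ℝ) ≠ 0 := by exact_mod_cast hn
  have hsub : {θ : ℝ | ¬ cos (n * θ) ≠ 0} ⊆ range fun k : ℤ => (2 * k + 1) * π / 2 / n := by
    intro θ hθ
    obtain ⟨k, hk⟩ := cos_eq_zero_iff.1 (not_not.1 hθ)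
    exact ⟨k, by simp only; rw [← hk, mul_div_cancel_left₀ _ hn']⟩
  exact ((countable_range _).mono hsub).measure_zero _

lemma re_polar_pow (n : ℕ) (r θ : ℝ) :
    ((((r * cos θ : ℝ) : ℂ) + (r * sin θ : ℝ) * Complex.I) ^ n).re = r ^ n * cos (n * θ) := by
  have : (((r * cos θ : ℝ) : ℂ) + (r * sin θ : ℝ) * Complex.I) ^ n =
      ((r ^ n : ℝ) : ℂ) * (((cos (n * θ) : ℝ) : ℂ) + (sin (n * θ) : ℝ) * Complex.I) := by
    push_cast
    rw [← Complex.cos_add_sin_mul_I_pow, ← mul_pow]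
    ring
  rw [this, Complex.re_ofReal_mul, Complex.add_re, Complex.re_ofReal_mul, Complex.ofReal_re,
    Complex.I_re, mul_zero, add_zero]

theorem area_fundamental_region_Rn (n : ℕ) (hn : 3 ≤ n) :
    volume {p : ℝ × ℝ | |(((p.1 : ℂ) + p.2 * Complex.I) ^ n).re| ≤ 1} =
      ENNReal.ofReal (eulerBeta (1 / 2 - 1 / n) (1 / 2)) := by
  have hn0 : n ≠ 0 := by omega
  have hn3 : (3 : ℝ) ≤ n := by exact_mod_cast hn
  have hs : -1 < (-2 / n : ℝ) := by
    rw [lt_div_iff₀ (by linarith)]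
    linarith
  obtain ⟨hi, he⟩ := integral_abs_cos_mul_rpow hs hn0
  have hpi : -π ≤ π := by linarith [pi_pos]
  set S := {p : ℝ × ℝ | |(((p.1 : ℂ) + p.2 * Complex.I) ^ n).re| ≤ 1} with hS
  have hSm : MeasurableSet S := by
    refine (isClosed_le ?_ continuous_const).measurableSet
    fun_prop
  have hind : ∀ p : ℝ × ℝ, S.indicator (1 : ℝ × ℝ → ENNReal) (polarCoord.symm p) =
      {r : ℝ | |r ^ n| * |cos (n * p.2)| ≤ 1}.indicator 1 p.1 := by
    intro p
    have : polarCoord.symm p ∈ S ↔ p.1 ∈ {r : ℝ | |r ^ n| * |cos (n * p.2)| ≤ 1} := by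
      rw [polarCoord_symm_apply, hS, mem_ofPred_eq, re_polar_pow, abs_mul, mem_ofPred_eq]
    by_cases h : polarCoord.symm p ∈ S
    · rw [indicator_of_mem h, indicator_of_mem (this.1 h)]
      rfl
    · rw [indicator_of_notMem h, indicator_of_notMem (mt this.2 h)]
  have hmeas : Measurable fun p : ℝ × ℝ =>
      ENNReal.ofReal p.1 • S.indicator (1 : ℝ × ℝ → ENNReal) (polarCoord.symm p) := by
    have := (measurable_one.indicator hSm : Measurable (S.indicator (1 : ℝ × ℝ → ENNReal)))
    have := this.comp continuous_polarCoord_symm.measurable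
    exact (ENNReal.measurable_ofReal.comp measurable_fst).smul this
  rw [← lintegral_indicator_one hSm, ← lintegral_comp_polarCoord_symm, polarCoord_target,
    Measure.volume_eq_prod, setLIntegral_prod_symm _ hmeas.aemeasurable]
  simp only [hind, smul_eq_mul]
  have hrad : ∀ᵐ θ ∂(volume.restrict (Ioo (-π) π)),
      ∫⁻ r in Ioi (0 : ℝ), ENNReal.ofReal r *
        {r : ℝ | |r ^ n| * |cos (n * θ)| ≤ 1}.indicator 1 r =
      ENNReal.ofReal (|cos (n * θ)| ^ (-2 / n : ℝ) / 2) := by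
    filter_upwards [ae_restrict_of_ae (ae_cos_mul_ne_zero hn0)] with θ hθ
    exact lintegral_radial hn0 (abs_pos.2 hθ)
  rw [lintegral_congr_ae hrad, ← ofReal_integral_eq_lintegral_ofReal, integral_div,
    ← integral_Ioc_eq_integral_Ioo, ← intervalIntegral.integral_of_le hpi, he]
  · congr 1
    rw [mul_div_cancel_left₀ _ two_ne_zero]
    congr 1
    ring
  · exact ((intervalIntegrable_iff_integrableOn_Ioo_of_le hpi).1 hi).div_const 2
  · exact Filter.Eventually.of_forall fun θ => by positivity
end

section
/- Let n ≥ 3 be an odd integer. Then the group Aut R_n of rational 2×2 matrices A = [[a,b],[c,d]] such that R_n(ax+by, cx+dy) = R_n(x,y) for all real x, y consists exactly of the two matrices [[1,0],[0,1]] and [[1,0],[0,−1]]; and the group Aut |R_n| of rational 2×2 matrices A such that R_n(ax+by, cx+dy) = ±R_n(x,y) for all real x, y consists exactly of the four matrices [[±1,0],[0,±1]]. -/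
/-!
With `z = x + iy` and `w` its conjugate, a real linear substitution reads `z ↦ α z + β w` for complex
`α = ((a + d) + (c - b) i) / 2` and `β = ((a - d) + (c + b) i) / 2`, and `2 R_n = z ^ n + w ^ n`.
The invariance `R_n ∘ A = ε R_n` on the unit circle (put `t = z / w`) is an identity of polynomials
`(α t + β) ^ n + (conj β t + conj α) ^ n = ε (t ^ n + 1)` (`poly_identity`).

The coefficients of `1`, `t`, `t ^ 2`, of which the last two vanish on the right since `n ≥ 3`, force
`α β = 0` (`alpha_or_beta_zero`), and then `β ^ n = ε` or `(conj α) ^ n = ε`. The remaining number is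
thus a root of unity with rational coordinates `p, q`: both `2 p` and `2 q` are rational algebraic
integers, hence integers, with `(2 p) ^ 2 + (2 q) ^ 2 = 4`. So it is one of `±1, ±i`, and oddness of
`n` excludes `±i` (`rat_root`). Hence `A = diag (ε, ε)` or `A = diag (ε, -ε)`.
-/

open Polynomial ComplexConjugate in
/-- If `Re ((α z + β conj z) ^ n) = ε Re (z ^ n)` for all `z`, then dividing by
`(conj z) ^ n` on the unit circle gives an identity of polynomials in `t = z / conj z`. -/
lemma poly_identity (n : ℕ) (α β : ℂ) (ε : ℝ)
    (h : ∀ z : ℂ, ((α * z + β * conj z) ^ n).re = ε * (z ^ n).re) :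
    (C α * X + C β) ^ n + (C (conj β) * X + C (conj α)) ^ n
      = C (ε : ℂ) * ((X : ℂ[X]) ^ n + 1) := by
  apply eq_of_infinite_eval_eq
  have hinf : (Set.Ioc (-Real.pi) Real.pi).Infinite := Set.Ioc_infinite (by linarith [Real.pi_pos])
  have hinj : Set.InjOn (fun θ : ℝ => (Circle.exp θ : ℂ)) (Set.Ioc (-Real.pi) Real.pi) := by
    intro x hx y hy hxy
    exact Circle.exp_injOn_Ioc (by linarith) hx hy (Circle.ext hxy)
  refine (hinf.image hinj).mono ?_
  rintro _ ⟨θ, -, rfl⟩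
  -- a square root `s` of the point `t = exp (i θ)` of the unit circle, so that `t = s / conj s`
  set s : ℂ := (Circle.exp (θ / 2) : ℂ) with hs
  have hst : (Circle.exp θ : ℂ) = s * s := by
    rw [hs, ← Circle.coe_mul, ← Circle.exp_add, add_halves]
  have hsc : s * conj s = 1 := by
    rw [Complex.mul_conj, Circle.normSq_coe]; simp
  have key : (α * s + β * conj s) ^ n + (conj α * conj s + conj β * s) ^ n
      = ε * (s ^ n + conj s ^ n) := by
    have h1 := Complex.add_conj ((α * s + β * conj s) ^ n)
    have h2 := Complex.add_conj (s ^ n)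
    simp only [map_pow, map_add, map_mul, Complex.conj_conj] at h1 h2
    rw [h1, h2, h s]
    push_cast
    ring
  simp only [Set.mem_ofPred_eq, eval_add, eval_pow, eval_mul, eval_C, eval_X, eval_one]
  rw [hst]
  have e1 : α * (s * s) + β = s * (α * s + β * conj s) := by linear_combination (-β) * hsc
  have e2 : conj β * (s * s) + conj α = s * (conj α * conj s + conj β * s) := by
    linear_combination (-conj α) * hsc
  have e3 : s ^ n * conj s ^ n = 1 := by rw [← mul_pow, hsc, one_pow]
  rw [e1, e2, mul_pow, mul_pow, mul_pow]
  linear_combination s ^ n * key + ε * e3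

open Polynomial in
lemma coeff_linear_pow (a b : ℂ) (n k : ℕ) (hk : k ≤ n) :
    ((C a * X + C b) ^ n).coeff k = a ^ k * b ^ (n - k) * n.choose k := by
  rw [add_pow, finsetSum_coeff, Finset.sum_eq_single k]
  · rw [mul_pow, ← C_pow, ← C_pow, ← C_eq_natCast, coeff_mul_C, coeff_mul_C, coeff_C_mul,
      coeff_X_pow_self]
    simp
  · intro j _ hj
    rw [mul_pow, ← C_pow, ← C_pow, ← C_eq_natCast, coeff_mul_C, coeff_mul_C, coeff_C_mul,
      coeff_X_pow, if_neg (Ne.symm hj)]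
    simp
  · intro hk'
    exact absurd (Finset.mem_range.2 (by omega)) hk'

open Polynomial ComplexConjugate in
/-- The coefficients of degrees `0, 1, 2` force the substitution to be complex linear or complex
antilinear; degree `0` then pins down an `n`-th power. -/
lemma alpha_or_beta_zero (n : ℕ) (hn : 3 ≤ n) (α β : ℂ) (ε : ℝ) (hε : ε ≠ 0)
    (h : ∀ z : ℂ, ((α * z + β * conj z) ^ n).re = ε * (z ^ n).re) :
    (α = 0 ∧ β ^ n = ε) ∨ (β = 0 ∧ conj α ^ n = ε) := by
  have hp := poly_identity n α β ε h
  have hc : ∀ k, k ≤ n → α ^ k * β ^ (n - k) * n.choose k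
      + conj β ^ k * conj α ^ (n - k) * n.choose k
      = ε * ((X : ℂ[X]) ^ n + 1).coeff k := by
    intro k hk
    have := congrArg (fun p => p.coeff k) hp
    simpa only [coeff_add, coeff_linear_pow _ _ n k hk, coeff_C_mul] using this
  have hmid : ∀ k, 0 < k → k < n →
      α ^ k * β ^ (n - k) + conj β ^ k * conj α ^ (n - k) = 0 := by
    intro k h0 hk
    have := hc k hk.le
    rw [coeff_add, coeff_X_pow, if_neg hk.ne, coeff_one, if_neg h0.ne', ← add_mul] at this
    have hch : ((n.choose k : ℕ) : ℂ) ≠ 0 := by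
      exact_mod_cast (Nat.choose_pos hk.le).ne'
    simpa [hch] using this
  have e0 := hc 0 (Nat.zero_le n)
  rw [coeff_add, coeff_X_pow, if_neg (by omega), coeff_one, if_pos rfl] at e0
  simp only [pow_zero, Nat.sub_zero, Nat.choose_zero_right, Nat.cast_one, one_mul, mul_one,
    zero_add] at e0
  have e1 := hmid 1 (by omega) (by omega)
  have e2 := hmid 2 (by omega) (by omega)
  by_cases hα : α = 0
  · left
    refine ⟨hα, ?_⟩
    subst hα
    simpa [show n ≠ 0 by omega] using e0
  by_cases hβ : β = 0
  · right
    refine ⟨hβ, ?_⟩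
    subst hβ
    simpa [show n ≠ 0 by omega] using e0
  exfalso
  obtain ⟨m, rfl⟩ : ∃ m, n = m + 3 := ⟨n - 3, by omega⟩
  rw [show m + 3 - 1 = m + 2 by omega] at e1
  rw [show m + 3 - 2 = m + 1 by omega] at e2
  have hα' : conj α ≠ 0 := by simpa using hα
  have hβ' : conj β ≠ 0 := by simpa using hβ
  -- dividing the degree `1` relation by the degree `2` relation gives `|α| = |β|`
  have hnorm : α * conj α = β * conj β := by
    have : (conj β * conj α ^ (m + 1)) * (α * conj α - β * conj β) = 0 := by
      linear_combination α * e1 - β * e2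
    have h2 := (mul_eq_zero.1 this).resolve_left (mul_ne_zero hβ' (pow_ne_zero _ hα'))
    exact sub_eq_zero.1 h2
  have : α * (ε : ℂ) = 0 := by
    linear_combination (-α) * e0 + β * e1 + conj α ^ (m + 2) * hnorm
  exact (mul_ne_zero hα (by exact_mod_cast hε)) this

/-- The only roots of unity in `ℚ(i)` are `±1, ±i`; an odd power of `±i` is not real. -/
lemma rat_root (n : ℕ) (hodd : Odd n) (p q ε : ℚ) (hε : ε = 1 ∨ ε = -1)
    (h : ((p : ℂ) + q * Complex.I) ^ n = (ε : ℂ)) : p = ε ∧ q = 0 := by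
  have hε2 : (ε : ℂ) ^ 2 = 1 := by rcases hε with rfl | rfl <;> norm_num
  have hn0 : 0 < n := hodd.pos
  have hroot : ∀ w : ℂ, w ^ n = (ε : ℂ) → IsIntegral ℤ w := by
    intro w hw
    refine IsIntegral.of_pow (n := n * 2) (by omega) ?_
    rw [pow_mul, hw, hε2]
    exact isIntegral_one
  have hz := hroot _ h
  have hz' : IsIntegral ℤ ((p : ℂ) - q * Complex.I) := by
    apply hroot
    have := congrArg (starRingEnd ℂ) h
    simpa [sub_eq_add_neg] using this
  have hI : IsIntegral ℤ Complex.I := by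
    refine IsIntegral.of_pow (n := 4) (by omega) ?_
    rw [Complex.I_pow_four]
    exact isIntegral_one
  have hrat : ∀ r : ℚ, IsIntegral ℤ (r : ℂ) → ∃ m : ℤ, (m : ℚ) = r := by
    intro r hr
    have h1 : IsIntegral ℤ (algebraMap ℚ ℂ r) := by simpa using hr
    have h2 : IsIntegral ℤ r := (isIntegral_algebraMap_iff (algebraMap ℚ ℂ).injective).1 h1
    simpa using IsIntegrallyClosed.isIntegral_iff.1 h2
  obtain ⟨m, hm⟩ := hrat (2 * p) (by
    have e : ((2 * p : ℚ) : ℂ) = (p + q * Complex.I) + (p - q * Complex.I) := by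
      push_cast
      ring
    rw [e]
    exact hz.add hz')
  obtain ⟨k, hk⟩ := hrat (2 * q) (by
    have e : ((2 * q : ℚ) : ℂ)
        = Complex.I * ((p - q * Complex.I) - (p + q * Complex.I)) := by
      push_cast
      linear_combination (2 * (q : ℂ)) * Complex.I_mul_I
    rw [e]
    exact hI.mul (hz'.sub hz))
  have hnorm : p ^ 2 + q ^ 2 = 1 := by
    have h1 : Complex.normSq ((p : ℂ) + q * Complex.I) ^ n = 1 := by
      rw [← map_pow, h]
      rcases hε with rfl | rfl <;> simp
    have h2 := (pow_eq_one_iff_of_nonneg (Complex.normSq_nonneg _) hn0.ne').1 h1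
    have h3 : ((p : ℝ) ^ 2 + (q : ℝ) ^ 2) = 1 := by
      rw [Complex.normSq_apply] at h2
      simp at h2
      linarith
    exact_mod_cast h3
  have hmk : m ^ 2 + k ^ 2 = 4 := by
    have : (m : ℚ) ^ 2 + (k : ℚ) ^ 2 = 4 := by rw [hm, hk]; linear_combination 4 * hnorm
    exact_mod_cast this
  have hk0 : k = 0 ∨ m = 0 := by
    have a1 : m ≤ 2 := by nlinarith
    have a2 : -2 ≤ m := by nlinarith
    have b1 : k ≤ 2 := by nlinarith
    have b2 : -2 ≤ k := by nlinarith
    interval_cases m <;> interval_cases k <;> simp_all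
  rcases hk0 with rfl | rfl
  · have hq : q = 0 := by simpa using hk.symm
    subst hq
    refine ⟨?_, rfl⟩
    have hpn : p ^ n = ε := by
      simp only [Rat.cast_zero, zero_mul, add_zero] at h
      exact_mod_cast h
    have hεn : ε ^ n = ε := by
      rcases hε with rfl | rfl
      · simp
      · exact hodd.neg_one_pow
    exact hodd.strictMono_pow.injective (hpn.trans hεn.symm)
  · exfalso
    have hp : p = 0 := by simpa using hm.symm
    subst hp
    obtain ⟨j, rfl⟩ := hodd
    -- `(q i) ^ (2 j + 1)` is purely imaginary
    have h1 : ((0 : ℚ) + q * Complex.I : ℂ) ^ (2 * j + 1)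
        = ((q ^ (2 * j + 1) * (-1) ^ j : ℝ) : ℂ) * Complex.I := by
      rw [Rat.cast_zero, zero_add, mul_pow, pow_succ Complex.I, pow_mul Complex.I, Complex.I_sq]
      push_cast
      ring
    rw [h1] at h
    have h2 := congrArg Complex.re h
    rw [Complex.re_ofReal_mul, Complex.I_re, mul_zero] at h2
    rcases hε with rfl | rfl <;> simp at h2

open ComplexConjugate in
/-- The entries of `A` determine `α`, `β`; the surviving one of the two has rational coordinates. -/
lemma aut_forward (n : ℕ) (hn : 3 ≤ n) (hodd : Odd n) (ε : ℚ) (hε : ε = 1 ∨ ε = -1)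
    (A : Matrix (Fin 2) (Fin 2) ℚ)
    (h : ∀ x y : ℝ,
        ((((A 0 0 : ℝ) * x + (A 0 1 : ℝ) * y : ℝ) + ((A 1 0 : ℝ) * x + (A 1 1 : ℝ) * y : ℝ) *
          Complex.I) ^ n).re = (ε : ℝ) * (((x : ℂ) + y * Complex.I) ^ n).re) :
    A = !![ε, 0; 0, ε] ∨ A = !![ε, 0; 0, -ε] := by
  rw [Matrix.eta_fin_two A]
  generalize A 0 0 = a at *
  generalize A 0 1 = b at *
  generalize A 1 0 = c at *
  generalize A 1 1 = d at *
  have hε0 : (ε : ℝ) ≠ 0 := by rcases hε with rfl | rfl <;> norm_num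
  have key := alpha_or_beta_zero n hn
    (((a + d : ℚ) / 2 : ℂ) + ((c - b : ℚ) / 2 : ℂ) * Complex.I)
    (((a - d : ℚ) / 2 : ℂ) + ((c + b : ℚ) / 2 : ℂ) * Complex.I) ε hε0 (by
      intro z
      have := h z.re z.im
      rw [Complex.re_add_im] at this
      rw [← this]
      congr 2
      apply Complex.ext <;> simp <;> ring)
  have hzero : ∀ u v : ℚ, ((u / 2 : ℂ) + (v / 2 : ℂ) * Complex.I) = 0 → u = 0 ∧ v = 0 := by
    intro u v huv
    have h1 := congrArg Complex.re huv
    have h2 := congrArg Complex.im huv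
    simp at h1 h2
    exact ⟨h1, h2⟩
  rcases key with ⟨h0, h1⟩ | ⟨h0, h1⟩
  · right
    obtain ⟨e1, e2⟩ := hzero _ _ h0
    obtain rfl : d = -a := by linarith
    obtain rfl : c = b := by linarith
    have := rat_root n hodd a c ε hε (by
      rw [Complex.ofReal_ratCast] at h1
      rw [← h1]
      congr 1
      push_cast
      ring)
    obtain ⟨rfl, rfl⟩ := this
    rfl
  · left
    obtain ⟨e1, e2⟩ := hzero _ _ h0
    obtain rfl : d = a := by linarith
    obtain rfl : c = -b := by linarith
    have := rat_root n hodd d b ε hε (by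
      rw [Complex.ofReal_ratCast] at h1
      rw [← h1]
      have h2 : conj (2 : ℂ) = 2 := map_ofNat _ 2
      have hr : ∀ r : ℚ, conj (r : ℂ) = r := fun r => map_ratCast _ r
      rw [map_add, map_mul, map_div₀, map_div₀, hr, hr, h2, Complex.conj_I]
      congr 1
      push_cast
      ring)
    obtain ⟨rfl, rfl⟩ := this
    simp

lemma aut_backward (n : ℕ) (hodd : Odd n) (ε δ : ℚ) (hε : ε = 1 ∨ ε = -1) (hδ : δ = ε ∨ δ = -ε)
    (x y : ℝ) :
    ((((ε : ℝ) * x + ((0 : ℚ) : ℝ) * y : ℝ) + (((0 : ℚ) : ℝ) * x + (δ : ℝ) * y : ℝ) *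
      Complex.I) ^ n).re = (ε : ℝ) * (((x : ℂ) + y * Complex.I) ^ n).re := by
  have hεn : (ε : ℂ) ^ n = ((ε : ℝ) : ℂ) := by
    rcases hε with rfl | rfl
    · simp
    · simp [hodd.neg_one_pow]
  rcases hδ with rfl | rfl
  · rw [← Complex.re_ofReal_mul, ← hεn, ← mul_pow]
    congr 2
    push_cast
    ring
  · rw [← Complex.conj_re (((x : ℂ) + y * Complex.I) ^ n), ← Complex.re_ofReal_mul, ← hεn,
      map_pow, ← mul_pow]
    congr 2
    simp
    ring

theorem aut_Rn_odd (n : ℕ) (hn : 3 ≤ n) (hodd : Odd n) :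
    ({A : Matrix (Fin 2) (Fin 2) ℚ | ∀ x y : ℝ,
        ((((A 0 0 : ℝ) * x + (A 0 1 : ℝ) * y : ℝ) + ((A 1 0 : ℝ) * x + (A 1 1 : ℝ) * y : ℝ) *
          Complex.I) ^ n).re = (((x : ℂ) + y * Complex.I) ^ n).re} =
      {!![1, 0; 0, 1], !![1, 0; 0, -1]}) ∧
    ({A : Matrix (Fin 2) (Fin 2) ℚ |
        (∀ x y : ℝ,
          ((((A 0 0 : ℝ) * x + (A 0 1 : ℝ) * y : ℝ) + ((A 1 0 : ℝ) * x + (A 1 1 : ℝ) * y : ℝ) *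
            Complex.I) ^ n).re = (((x : ℂ) + y * Complex.I) ^ n).re) ∨
        (∀ x y : ℝ,
          ((((A 0 0 : ℝ) * x + (A 0 1 : ℝ) * y : ℝ) + ((A 1 0 : ℝ) * x + (A 1 1 : ℝ) * y : ℝ) *
            Complex.I) ^ n).re = -(((x : ℂ) + y * Complex.I) ^ n).re)} =
      {!![1, 0; 0, 1], !![-1, 0; 0, 1], !![1, 0; 0, -1], !![-1, 0; 0, -1]}) := by
  have hone : ∀ A : Matrix (Fin 2) (Fin 2) ℚ, (∀ x y : ℝ,
        ((((A 0 0 : ℝ) * x + (A 0 1 : ℝ) * y : ℝ) + ((A 1 0 : ℝ) * x + (A 1 1 : ℝ) * y : ℝ) *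
          Complex.I) ^ n).re = (((x : ℂ) + y * Complex.I) ^ n).re) ↔
      A = !![1, 0; 0, 1] ∨ A = !![1, 0; 0, -1] := by
    intro A
    constructor
    · intro h
      exact aut_forward n hn hodd 1 (Or.inl rfl) A (by simpa using h)
    · rintro (rfl | rfl) x y
      · simp
      · simpa using aut_backward n hodd 1 (-1) (by simp) (by simp) x y
  have hneg : ∀ A : Matrix (Fin 2) (Fin 2) ℚ, (∀ x y : ℝ,
        ((((A 0 0 : ℝ) * x + (A 0 1 : ℝ) * y : ℝ) + ((A 1 0 : ℝ) * x + (A 1 1 : ℝ) * y : ℝ) *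
          Complex.I) ^ n).re = -(((x : ℂ) + y * Complex.I) ^ n).re) ↔
      A = !![-1, 0; 0, -1] ∨ A = !![-1, 0; 0, 1] := by
    intro A
    constructor
    · intro h
      simpa using aut_forward n hn hodd (-1) (Or.inr rfl) A (by simpa using h)
    · rintro (rfl | rfl) x y
      · simpa using aut_backward n hodd (-1) (-1) (by simp) (by simp) x y
      · simpa using aut_backward n hodd (-1) 1 (by simp) (by simp) x y
  constructor
  · ext A
    simp only [Set.mem_ofPred_eq, Set.mem_insert_iff, Set.mem_singleton_iff]
    exact hone A
  · ext A
    simp only [Set.mem_ofPred_eq, Set.mem_insert_iff, Set.mem_singleton_iff]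
    rw [hone A, hneg A]
    tauto
end
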